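/- (Proposition 2.) Let ρ ∈ [0,1], Δ > 0, F ∈ ℝ^{M×N} and y ∈ ℝ^M. For every R ∈ ℝ^N and Σ ∈ (0,∞)^N, the constrained Bethe free energy satisfies (M/2)·log(2πΔ) ≤ F_Bethe(R,Σ) ≤ F_MF(R,Σ); in particular F_Bethe is bounded below and bounded above by the mean-field free energy. -/

import Mathlib

open MeasureTheory ProbabilityTheory

/-- The prior `P₀ = ρ·N(0,1) + (1-ρ)·δ₀`. -/
noncomputable def P0 (ρ : ℝ) : Measure ℝ :=
  ENNReal.ofReal ρ • gaussianReal 0 1 + ENNReal.ofReal (1 - ρ) • Measure.dirac 0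

/-- Partition function `Z(R,Σ) = ∫ exp(-(x-R)²/(2Σ²)) dP₀(x)`. -/
noncomputable def Zpart (ρ R σ : ℝ) : ℝ :=
  ∫ x, Real.exp (-(x - R) ^ 2 / (2 * σ ^ 2)) ∂(P0 ρ)

/-- Posterior mean `f_a(R,Σ)`. -/
noncomputable def fa (ρ R σ : ℝ) : ℝ :=
  (Zpart ρ R σ)⁻¹ * ∫ x, x * Real.exp (-(x - R) ^ 2 / (2 * σ ^ 2)) ∂(P0 ρ)

/-- Posterior variance `f_c(R,Σ)`. -/
noncomputable def fc (ρ R σ : ℝ) : ℝ :=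
  (Zpart ρ R σ)⁻¹ * (∫ x, x ^ 2 * Real.exp (-(x - R) ^ 2 / (2 * σ ^ 2)) ∂(P0 ρ))
    - fa ρ R σ ^ 2

/-- The (unconstrained) mean-field free energy `F_MF(R,Σ,a,c)`. -/
noncomputable def FMF (ρ : ℝ) {M N : ℕ} (F : Fin M → Fin N → ℝ) (y : Fin M → ℝ)
    (Δ : ℝ) (R Sv a c : Fin N → ℝ) : ℝ :=
  (M : ℝ) / 2 * Real.log (2 * Real.pi * Δ)
    + 1 / (2 * Δ) * ∑ μ, ((y μ - ∑ i, F μ i * a i) ^ 2 + ∑ i, F μ i ^ 2 * c i)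
    - ∑ i, (Real.log (Zpart ρ (R i) (Sv i)) + (c i + (a i - R i) ^ 2) / (2 * Sv i ^ 2))

/-- The (unconstrained) Bethe free energy `F_B(R,Σ,a,c)`. -/
noncomputable def FB (ρ : ℝ) {M N : ℕ} (F : Fin M → Fin N → ℝ) (y : Fin M → ℝ)
    (Δ : ℝ) (R Sv a c : Fin N → ℝ) : ℝ :=
  1 / (2 * Δ) * ∑ μ, (y μ - ∑ i, F μ i * a i) ^ 2
    + (M : ℝ) / 2 * Real.log (2 * Real.pi * Δ)
    + 1 / 2 * ∑ μ, Real.log (1 + (∑ i, F μ i ^ 2 * c i) / Δ)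
    - ∑ i, (Real.log (Zpart ρ (R i) (Sv i)) + (c i + (a i - R i) ^ 2) / (2 * Sv i ^ 2))

/-!
The posterior of a site is the prior tilted by the Gaussian likelihood, `f_a` and `f_c` are its mean
and variance, and by the bias-variance decomposition the site term `log Z + (c + (a - R)²) / (2Σ²)`
is minus the Kullback-Leibler divergence of the posterior from the prior, hence nonpositive. With
the data misfit and `log (1 + v / Δ)` nonnegative, this gives the lower bound; the upper bound is
`log (1 + v / Δ) ≤ v / Δ`. The Gaussian factor bounds the second moment of every posterior, so the
prior can be any probability measure.
-/

section TiltedMeasure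

open InformationTheory

variable {Ω : Type*} {mΩ : MeasurableSpace Ω} {μ : Measure Ω}

theorem toReal_klDiv_tilted_self [IsProbabilityMeasure μ] {f : Ω → ℝ}
    (hexp : Integrable (fun ω ↦ Real.exp (f ω)) μ) (hf : Integrable f (μ.tilted f)) :
    (klDiv (μ.tilted f) μ).toReal = ∫ ω, f ω ∂μ.tilted f - Real.log (∫ ω, Real.exp (f ω) ∂μ) := by
  have := isProbabilityMeasure_tilted hexp
  have hac : μ.tilted f ≪ μ := tilted_absolutelyContinuous μ f
  calc (klDiv (μ.tilted f) μ).toReal = ∫ ω, llr (μ.tilted f) μ ω ∂μ.tilted f :=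
        toReal_klDiv_of_measure_eq hac (by simp only [measure_univ])
    _ = ∫ ω, (f ω - Real.log (∫ ω, Real.exp (f ω) ∂μ)) ∂μ.tilted f :=
        integral_congr_ae (hac.ae_le (log_rnDeriv_tilted_left_self hexp))
    _ = ∫ ω, f ω ∂μ.tilted f - Real.log (∫ ω, Real.exp (f ω) ∂μ) := by
        rw [integral_sub hf (integrable_const _), integral_const, probReal_univ, one_smul]

theorem integral_tilted_eq_inv_mul (f g : Ω → ℝ) :
    ∫ ω, g ω ∂μ.tilted f
      = (∫ ω, Real.exp (f ω) ∂μ)⁻¹ * ∫ ω, g ω * Real.exp (f ω) ∂μ := by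
  rw [integral_tilted, ← integral_const_mul]
  congr with ω
  rw [smul_eq_mul]
  ring

theorem integral_sub_sq_eq_variance_add [IsProbabilityMeasure μ] {X : Ω → ℝ} (hX : MemLp X 2 μ)
    (t : ℝ) : ∫ ω, (X ω - t) ^ 2 ∂μ = Var[X; μ] + (∫ ω, X ω ∂μ - t) ^ 2 := by
  have hvar := variance_eq_sub (hX.sub (memLp_const t))
  have hmean : ∫ ω, (X ω - t) ∂μ = ∫ ω, X ω ∂μ - t := by
    rw [integral_sub (hX.integrable one_le_two) (integrable_const t), integral_const,
      probReal_univ, one_smul]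
  simp only [Pi.sub_def, Pi.pow_def, variance_sub_const hX.aestronglyMeasurable, hmean] at hvar
  linarith

end TiltedMeasure

/-- The posterior distribution of a scalar signal with prior `P` that is observed to be `R` through
additive Gaussian noise of standard deviation `σ`. The Gaussian likelihood is not normalised, since
`Measure.tilted` divides by the total mass. -/
noncomputable def gaussianPosterior (P : Measure ℝ) (R σ : ℝ) : Measure ℝ :=
  P.tilted fun x ↦ -(x - R) ^ 2 / (2 * σ ^ 2)

/-- The contribution of one component of the signal to the free energies, for a component with prior
`P`, mean `a` and variance `c`. It is a relative entropy only when `a` and `c` are the mean and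
variance of `gaussianPosterior P R σ`; here `a` and `c` are free, as in `FMF` and `FB`. -/
noncomputable def siteEntropy (P : Measure ℝ) (R σ a c : ℝ) : ℝ :=
  Real.log (∫ x, Real.exp (-(x - R) ^ 2 / (2 * σ ^ 2)) ∂P) + (c + (a - R) ^ 2) / (2 * σ ^ 2)

theorem exp_neg_div_mul_self_le {s : ℝ} (hs : 0 < s) (t : ℝ) : Real.exp (-t / s) * t ≤ s := by
  have hexp : t / s ≤ Real.exp (t / s) := by linarith [Real.add_one_le_exp (t / s)]
  rw [neg_div, Real.exp_neg, inv_mul_le_iff₀ (Real.exp_pos _)]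
  exact (div_le_iff₀ hs).mp hexp

section GaussianPosterior

variable (P : Measure ℝ) (R : ℝ) {σ : ℝ}

theorem integrable_exp_neg_sub_sq_div [IsFiniteMeasure P] (σ : ℝ) :
    Integrable (fun x ↦ Real.exp (-(x - R) ^ 2 / (2 * σ ^ 2))) P := by
  refine .of_bound (by fun_prop) 1 (ae_of_all _ fun x ↦ ?_)
  rw [Real.norm_eq_abs, Real.abs_exp, Real.exp_le_one_iff]
  exact div_nonpos_of_nonpos_of_nonneg (neg_nonpos.mpr (sq_nonneg _)) (by positivity)

instance isProbabilityMeasure_gaussianPosterior [IsProbabilityMeasure P] (σ : ℝ) :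
    IsProbabilityMeasure (gaussianPosterior P R σ) :=
  isProbabilityMeasure_tilted (integrable_exp_neg_sub_sq_div P R σ)

theorem memLp_id_gaussianPosterior [IsFiniteMeasure P] (hσ : σ ≠ 0) :
    MemLp id 2 (gaussianPosterior P R σ) := by
  have hsq : Integrable (fun x ↦ (x - R) ^ 2) (gaussianPosterior P R σ) := by
    rw [gaussianPosterior, integrable_tilted_iff (integrable_exp_neg_sub_sq_div P R σ)]
    refine .of_bound (by fun_prop) (2 * σ ^ 2) (ae_of_all _ fun x ↦ ?_)
    rw [smul_eq_mul, Real.norm_of_nonneg (by positivity)]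
    exact exp_neg_div_mul_self_le (by positivity) _
  have : IsFiniteMeasure (gaussianPosterior P R σ) := inferInstanceAs (IsFiniteMeasure (P.tilted _))
  have hsub : MemLp (fun x ↦ x - R) 2 (gaussianPosterior P R σ) :=
    (memLp_two_iff_integrable_sq (by fun_prop)).mpr hsq
  simpa only [Pi.add_def, sub_add_cancel, Function.id_def] using hsub.add (memLp_const R)

variable [IsProbabilityMeasure P]

theorem siteEntropy_gaussianPosterior (hσ : σ ≠ 0) :
    siteEntropy P R σ (∫ x, x ∂gaussianPosterior P R σ) Var[id; gaussianPosterior P R σ]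
      = -(InformationTheory.klDiv (gaussianPosterior P R σ) P).toReal := by
  have hmem := memLp_id_gaussianPosterior P R hσ
  have hlik : Integrable (fun x ↦ -(x - R) ^ 2 / (2 * σ ^ 2)) (gaussianPosterior P R σ) :=
    ((hmem.sub (memLp_const R)).integrable_sq.neg).div_const _
  have hmoment := integral_sub_sq_eq_variance_add hmem R
  simp only [id_eq] at hmoment
  have hkl := toReal_klDiv_tilted_self (integrable_exp_neg_sub_sq_div P R σ) hlik
  rw [← gaussianPosterior, integral_div, integral_neg, hmoment] at hkl
  rw [hkl, siteEntropy]
  ring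

theorem siteEntropy_gaussianPosterior_nonpos (hσ : σ ≠ 0) :
    siteEntropy P R σ (∫ x, x ∂gaussianPosterior P R σ) Var[id; gaussianPosterior P R σ] ≤ 0 := by
  rw [siteEntropy_gaussianPosterior P R hσ]
  exact neg_nonpos.mpr ENNReal.toReal_nonneg

end GaussianPosterior

section FreeEnergy

variable {ι κ : Type*} [Fintype κ]

theorem sum_sq_mul_div_nonneg (f : κ → ℝ) {c : κ → ℝ} {Δ : ℝ} (hΔ : 0 ≤ Δ) (hc : ∀ i, 0 ≤ c i) :
    0 ≤ (∑ i, f i ^ 2 * c i) / Δ :=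
  div_nonneg (Finset.sum_nonneg fun i _ ↦ mul_nonneg (sq_nonneg _) (hc i)) hΔ

variable [Fintype ι]

/-- The mean-field free energy `FMF` for an arbitrary prior `P` and arbitrary finite index types. -/
noncomputable def meanFieldFreeEnergy (P : Measure ℝ) (F : ι → κ → ℝ) (y : ι → ℝ) (Δ : ℝ)
    (R Sv a c : κ → ℝ) : ℝ :=
  (Fintype.card ι : ℝ) / 2 * Real.log (2 * Real.pi * Δ)
    + 1 / (2 * Δ) * ∑ μ, ((y μ - ∑ i, F μ i * a i) ^ 2 + ∑ i, F μ i ^ 2 * c i)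
    - ∑ i, siteEntropy P (R i) (Sv i) (a i) (c i)

/-- The Bethe free energy `FB` for an arbitrary prior `P` and arbitrary finite index types. -/
noncomputable def betheFreeEnergy (P : Measure ℝ) (F : ι → κ → ℝ) (y : ι → ℝ) (Δ : ℝ)
    (R Sv a c : κ → ℝ) : ℝ :=
  1 / (2 * Δ) * ∑ μ, (y μ - ∑ i, F μ i * a i) ^ 2
    + (Fintype.card ι : ℝ) / 2 * Real.log (2 * Real.pi * Δ)
    + 1 / 2 * ∑ μ, Real.log (1 + (∑ i, F μ i ^ 2 * c i) / Δ)
    - ∑ i, siteEntropy P (R i) (Sv i) (a i) (c i)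

variable {P : Measure ℝ} (F : ι → κ → ℝ) (y : ι → ℝ) {Δ : ℝ} {R Sv a c : κ → ℝ}

theorem le_betheFreeEnergy (hΔ : 0 < Δ) (hc : ∀ i, 0 ≤ c i)
    (hsite : ∀ i, siteEntropy P (R i) (Sv i) (a i) (c i) ≤ 0) :
    (Fintype.card ι : ℝ) / 2 * Real.log (2 * Real.pi * Δ)
      ≤ betheFreeEnergy P F y Δ R Sv a c := by
  have hentropy : ∑ i, siteEntropy P (R i) (Sv i) (a i) (c i) ≤ 0 :=
    Finset.sum_nonpos fun i _ ↦ hsite i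
  have hmisfit : 0 ≤ 1 / (2 * Δ) * ∑ μ, (y μ - ∑ i, F μ i * a i) ^ 2 := by positivity
  have hlog : 0 ≤ ∑ μ, Real.log (1 + (∑ i, F μ i ^ 2 * c i) / Δ) :=
    Finset.sum_nonneg fun μ _ ↦
      Real.log_nonneg (le_add_of_nonneg_right (sum_sq_mul_div_nonneg (F μ) hΔ.le hc))
  unfold betheFreeEnergy
  linarith

theorem betheFreeEnergy_le_meanFieldFreeEnergy (hΔ : 0 < Δ) (hc : ∀ i, 0 ≤ c i) :
    betheFreeEnergy P F y Δ R Sv a c ≤ meanFieldFreeEnergy P F y Δ R Sv a c := by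
  have hlog : ∑ μ, Real.log (1 + (∑ i, F μ i ^ 2 * c i) / Δ)
      ≤ ∑ μ, (∑ i, F μ i ^ 2 * c i) / Δ :=
    Finset.sum_le_sum fun μ _ ↦ by
      have hpos : 0 < 1 + (∑ i, F μ i ^ 2 * c i) / Δ :=
        add_pos_of_pos_of_nonneg one_pos (sum_sq_mul_div_nonneg (F μ) hΔ.le hc)
      linarith [Real.log_le_sub_one_of_pos hpos]
  have hscale : 1 / (2 * Δ) * ∑ μ, ∑ i, F μ i ^ 2 * c i
      = 1 / 2 * ∑ μ, (∑ i, F μ i ^ 2 * c i) / Δ := by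
    rw [← Finset.sum_div]
    ring
  unfold betheFreeEnergy meanFieldFreeEnergy
  rw [Finset.sum_add_distrib, mul_add, hscale]
  linarith

theorem stmt8_general [IsProbabilityMeasure P] (hΔ : 0 < Δ) (hS : ∀ i, Sv i ≠ 0)
    (ha : ∀ i, a i = ∫ x, x ∂gaussianPosterior P (R i) (Sv i))
    (hc : ∀ i, c i = Var[id; gaussianPosterior P (R i) (Sv i)]) :
    (Fintype.card ι : ℝ) / 2 * Real.log (2 * Real.pi * Δ) ≤ betheFreeEnergy P F y Δ R Sv a c ∧
    betheFreeEnergy P F y Δ R Sv a c ≤ meanFieldFreeEnergy P F y Δ R Sv a c := by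
  have hc_nonneg : ∀ i, 0 ≤ c i := fun i ↦ hc i ▸ variance_nonneg _ _
  have hsite : ∀ i, siteEntropy P (R i) (Sv i) (a i) (c i) ≤ 0 := fun i ↦ by
    rw [ha i, hc i]
    exact siteEntropy_gaussianPosterior_nonpos P (R i) (hS i)
  exact ⟨le_betheFreeEnergy F y hΔ hc_nonneg hsite,
    betheFreeEnergy_le_meanFieldFreeEnergy F y hΔ hc_nonneg⟩

end FreeEnergy

section GaussBernoulli

variable {ρ : ℝ}

theorem isProbabilityMeasure_P0 (hρ : ρ ∈ Set.Icc (0 : ℝ) 1) : IsProbabilityMeasure (P0 ρ) where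
  measure_univ := by
    simp [P0, ← ENNReal.ofReal_add hρ.1 (sub_nonneg.mpr hρ.2)]

theorem fa_eq_integral_gaussianPosterior (ρ R σ : ℝ) :
    fa ρ R σ = ∫ x, x ∂gaussianPosterior (P0 ρ) R σ :=
  (integral_tilted_eq_inv_mul _ fun x ↦ x).symm

theorem fc_eq_variance_gaussianPosterior (hρ : ρ ∈ Set.Icc (0 : ℝ) 1) (R : ℝ) {σ : ℝ}
    (hσ : σ ≠ 0) : fc ρ R σ = Var[id; gaussianPosterior (P0 ρ) R σ] := by
  have := isProbabilityMeasure_P0 hρ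
  rw [variance_eq_sub (memLp_id_gaussianPosterior (P0 ρ) R hσ), fc,
    fa_eq_integral_gaussianPosterior]
  exact congrArg (· - _) (integral_tilted_eq_inv_mul _ fun x ↦ x ^ 2).symm

variable {M N : ℕ} (F : Fin M → Fin N → ℝ) (y : Fin M → ℝ) (Δ : ℝ) (R Sv a c : Fin N → ℝ)

theorem FB_eq_betheFreeEnergy (ρ : ℝ) :
    FB ρ F y Δ R Sv a c = betheFreeEnergy (P0 ρ) F y Δ R Sv a c := by
  simp only [FB, betheFreeEnergy, siteEntropy, Zpart, Fintype.card_fin]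

theorem FMF_eq_meanFieldFreeEnergy (ρ : ℝ) :
    FMF ρ F y Δ R Sv a c = meanFieldFreeEnergy (P0 ρ) F y Δ R Sv a c := by
  simp only [FMF, meanFieldFreeEnergy, siteEntropy, Zpart, Fintype.card_fin]

end GaussBernoulli

/-- Proposition 2: with `a_i = f_a(R_i,Σ_i)` and `c_i = f_c(R_i,Σ_i)`
(the constrained free energies), for every `R` and `Σ ∈ (0,∞)^N` one has
`(M/2)·log(2πΔ) ≤ F_Bethe(R,Σ) ≤ F_MF(R,Σ)`. -/
theorem stmt8 (ρ : ℝ) (hρ : ρ ∈ Set.Icc (0 : ℝ) 1) {M N : ℕ}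
    (F : Fin M → Fin N → ℝ) (y : Fin M → ℝ) (Δ : ℝ) (hΔ : 0 < Δ)
    (R Sv : Fin N → ℝ) (hS : ∀ i, 0 < Sv i)
    (a c : Fin N → ℝ) (ha : ∀ i, a i = fa ρ (R i) (Sv i))
    (hc : ∀ i, c i = fc ρ (R i) (Sv i)) :
    (M : ℝ) / 2 * Real.log (2 * Real.pi * Δ) ≤ FB ρ F y Δ R Sv a c ∧
    FB ρ F y Δ R Sv a c ≤ FMF ρ F y Δ R Sv a c := by
  have := isProbabilityMeasure_P0 hρ
  have hS_ne : ∀ i, Sv i ≠ 0 := fun i ↦ (hS i).ne'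
  simpa only [FB_eq_betheFreeEnergy, FMF_eq_meanFieldFreeEnergy, Fintype.card_fin] using
    stmt8_general F y hΔ hS_ne
      (fun i ↦ (ha i).trans (fa_eq_integral_gaussianPosterior ρ (R i) (Sv i)))
      (fun i ↦ (hc i).trans (fc_eq_variance_gaussianPosterior hρ (R i) (hS_ne i)))
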